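/- Let P be a finite poset and let X and X' be finite posets containing no chain of three distinct elements x < y < z. If f: X → P and g: X' → P are order-embeddings with conv(Im f) = conv(Im g), then Im f = Im g. -/

import Mathlib

/-- Convex hull of a subset of a poset. -/
def convHull {P : Type} [Preorder P] (S : Set P) : Set P :=
  {x | ∃ y ∈ S, ∃ z ∈ S, y ≤ x ∧ x ≤ z}

theorem range_subset_aux {P X : Type} [PartialOrder P] [PartialOrder X]
    (hX : ¬ ∃ x y z : X, x < y ∧ y < z) (f : X ↪o P) (T : Set P)
    (h : convHull (Set.range ⇑f) = convHull T) : Set.range ⇑f ⊆ T := by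
  rintro _ ⟨x, rfl⟩
  have hx : f x ∈ convHull T := h ▸ ⟨f x, ⟨x, rfl⟩, f x, ⟨x, rfl⟩, le_rfl, le_rfl⟩
  obtain ⟨y, hy, z, hz, hyx, hxz⟩ := hx
  have hyc : y ∈ convHull (Set.range ⇑f) := h ▸ ⟨y, hy, y, hy, le_rfl, le_rfl⟩
  have hzc : z ∈ convHull (Set.range ⇑f) := h ▸ ⟨z, hz, z, hz, le_rfl, le_rfl⟩
  obtain ⟨_, ⟨a, rfl⟩, _, _, hay, _⟩ := hyc
  obtain ⟨_, _, _, ⟨b, rfl⟩, _, hzb⟩ := hzc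
  have hax : a ≤ x := f.le_iff_le.1 (hay.trans hyx)
  have hxb : x ≤ b := f.le_iff_le.1 (hxz.trans hzb)
  rcases hax.eq_or_lt with rfl | hax
  · rwa [le_antisymm hay hyx]
  rcases hxb.eq_or_lt with rfl | hxb
  · rwa [le_antisymm hxz hzb]
  exact absurd ⟨a, x, b, hax, hxb⟩ hX

theorem statement_13 (P X X' : Type) [Fintype P] [PartialOrder P]
    [Fintype X] [PartialOrder X] [Fintype X'] [PartialOrder X']
    (hX : ¬ ∃ x y z : X, x < y ∧ y < z) (hX' : ¬ ∃ x y z : X', x < y ∧ y < z)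
    (f : X ↪o P) (g : X' ↪o P)
    (h : convHull (Set.range ⇑f) = convHull (Set.range ⇑g)) :
    Set.range ⇑f = Set.range ⇑g := by
  exact Set.Subset.antisymm (range_subset_aux hX f _ h) (range_subset_aux hX' g _ h.symm)
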